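/- arXiv:2406.04530 — 2 statements merged into one kernel-verified Lean document; each statement's English description precedes it below -/
import Mathlib

section
/- Let 0 < ε* and C > 0, let A ∈ ℝ^{n×z} have full column rank z with κ(A) = ‖A†‖‖A‖ satisfying Cε*κ(A) < 1, and suppose P̄ ∈ ℝ^{n×z} is such that there exist Ẽ ∈ ℝ^{z×n} and F̃ ∈ ℝ^{n×z} with P̄ + F̃ = (Aᵀ + Ẽ)†, ‖Ẽ‖ ≤ Cε*‖A‖, and ‖F̃‖ ≤ Cε*‖P̄‖. Then for any matrix B ∈ ℝ^{z×(q+1)} and any vector v ∈ ℝ^{q+1}, ‖(Aᵀ)†Bv − P̄Bv‖ ≤ (C‖A†‖ε* / (1 − Cκ(A)ε*)) · (√2·κ(A) + 1/(1 − Cε*)) · ‖B‖·‖v‖. -/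
/-!
Write `M = Aᵀ`, `G = M† = Adagᵀ`, `M̃ = M + E`, `Q = M̃†` and `P = Q M̃`, the orthogonal projection
onto the row space of `M̃`. Full column rank of `A` gives `M G = 1`, hence `P G = Q + Q E G`.

* Since `‖P‖ ≤ 1`, this identity yields `‖Q‖ ≤ ‖G‖ + ‖Q‖ ‖E‖ ‖G‖`, which bounds `‖Q‖`
  (`norm_perturbed_pinv_le`).
* It also gives the splitting `G - Q = (1 - P) G + Q E G`, whose summands have orthogonal ranges
  because `P Q = Q`. As `G = Mᵀ Gᵀ G` and `(1 - P) M̃ᵀ = 0`, the first summand equals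
  `-(1 - P) Eᵀ Gᵀ G`, of norm at most `‖E‖ ‖G‖²`; Pythagoras gives the Wedin-type bound with
  the factor `√2` (`norm_pinv_sub_sq_le`).
* The forward error satisfies `‖F‖ ≤ Cε ‖P̄‖` with `(1 - Cε) ‖P̄‖ ≤ ‖Q‖`; here `Cε < 1` follows
  from `κ ≥ 1`, which holds whenever `z > 0`.

All norm identities are obtained from the C⋆-identity `‖Xᵀ X‖ = ‖X‖²` of the spectral norm.
-/

open scoped Matrix
noncomputable section

/-- `N` is the Moore–Penrose pseudoinverse of `M` (the four Penrose equations). -/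
def IsMPInv {m n : ℕ} (M : Matrix (Fin m) (Fin n) ℝ) (N : Matrix (Fin n) (Fin m) ℝ) : Prop :=
  M * N * M = M ∧ N * M * N = N ∧ (M * N)ᵀ = M * N ∧ (N * M)ᵀ = N * M

/-- View a plain vector in `ℝⁿ` as an element of Euclidean space (with the ℓ² norm). -/
def toE {n : ℕ} (v : Fin n → ℝ) : EuclideanSpace ℝ (Fin n) :=
  (WithLp.equiv 2 (Fin n → ℝ)).symm v

/-- The spectral (ℓ² operator) norm of a matrix. -/
noncomputable def spec {m n : ℕ} (A : Matrix (Fin m) (Fin n) ℝ) : ℝ :=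
  ‖LinearMap.toContinuousLinearMap (Matrix.toEuclideanLin A)‖

open scoped Matrix.Norms.L2Operator

lemma spec_eq_norm {m n : ℕ} (A : Matrix (Fin m) (Fin n) ℝ) : spec A = ‖A‖ := rfl

lemma norm_transpose_l2 {m n : ℕ} (A : Matrix (Fin m) (Fin n) ℝ) : ‖Aᵀ‖ = ‖A‖ := by
  rw [← Matrix.conjTranspose_eq_transpose_of_trivial, Matrix.l2_opNorm_conjTranspose]

lemma norm_transpose_mul_self_l2 {m n : ℕ} (A : Matrix (Fin m) (Fin n) ℝ) :
    ‖Aᵀ * A‖ = ‖A‖ * ‖A‖ := by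
  rw [← Matrix.conjTranspose_eq_transpose_of_trivial, Matrix.l2_opNorm_conjTranspose_mul_self]

lemma norm_le_one_of_symm_idem {n : ℕ} (P : Matrix (Fin n) (Fin n) ℝ)
    (hs : Pᵀ = P) (hi : P * P = P) : ‖P‖ ≤ 1 := by
  have h := norm_transpose_mul_self_l2 P
  rw [hs, hi] at h
  by_contra! hlt
  nlinarith

/-- Pythagoras for matrices with mutually orthogonal ranges. -/
lemma norm_add_sq_le_of_orthogonal {m n : ℕ} (X Y : Matrix (Fin m) (Fin n) ℝ)
    (h : Xᵀ * Y = 0) : ‖X + Y‖ ^ 2 ≤ ‖X‖ ^ 2 + ‖Y‖ ^ 2 := by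
  have h' : Yᵀ * X = 0 := by
    have := congrArg Matrix.transpose h
    simpa [Matrix.transpose_mul] using this
  have hD : (X + Y)ᵀ * (X + Y) = Xᵀ * X + Yᵀ * Y := by
    rw [Matrix.transpose_add, Matrix.add_mul, Matrix.mul_add, Matrix.mul_add, h, h']
    simp
  have := norm_add_le (Xᵀ * X) (Yᵀ * Y)
  rw [← hD, norm_transpose_mul_self_l2, norm_transpose_mul_self_l2,
    norm_transpose_mul_self_l2] at this
  nlinarith

lemma pinv_mul_eq_one {n z : ℕ} {A : Matrix (Fin n) (Fin z) ℝ} (hrank : A.rank = z)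
    {N : Matrix (Fin z) (Fin n) ℝ} (h : IsMPInv A N) : N * A = 1 := by
  have hu : IsUnit (Aᵀ * A) := by
    rw [← Matrix.linearIndependent_cols_iff_isUnit, linearIndependent_iff_card_eq_finrank_span,
      Set.finrank, ← Matrix.rank_eq_finrank_span_cols, Matrix.rank_transpose_mul_self, hrank,
      Fintype.card_fin]
  apply hu.mul_left_cancel
  rw [Matrix.mul_assoc, ← Matrix.mul_assoc A, h.1, Matrix.mul_one]

section Perturbation

variable {n z : ℕ} {M E : Matrix (Fin z) (Fin n) ℝ} {G Q : Matrix (Fin n) (Fin z) ℝ}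

lemma projection_mul_eq (hMG : M * G = 1) : Q * (M + E) * G = Q + Q * E * G := by
  rw [Matrix.mul_add, Matrix.add_mul, Matrix.mul_assoc Q M G, hMG, Matrix.mul_one]

lemma norm_perturbed_pinv_le (hMG : M * G = 1) (hQ : IsMPInv (M + E) Q) :
    ‖Q‖ ≤ ‖G‖ + ‖Q‖ * ‖E‖ * ‖G‖ := by
  obtain ⟨-, h2, -, h4⟩ := hQ
  have hP : ‖Q * (M + E)‖ ≤ 1 :=
    norm_le_one_of_symm_idem _ h4 (by rw [← Matrix.mul_assoc, h2])
  have hQe : Q = Q * (M + E) * G - Q * E * G := by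
    rw [projection_mul_eq hMG, add_sub_cancel_right]
  calc ‖Q‖ = ‖Q * (M + E) * G - Q * E * G‖ := congrArg _ hQe
    _ ≤ ‖Q * (M + E) * G‖ + ‖Q * E * G‖ := norm_sub_le _ _
    _ ≤ ‖Q * (M + E)‖ * ‖G‖ + ‖Q * E‖ * ‖G‖ :=
        add_le_add (Matrix.l2_opNorm_mul _ _) (Matrix.l2_opNorm_mul _ _)
    _ ≤ 1 * ‖G‖ + ‖Q‖ * ‖E‖ * ‖G‖ := by
        gcongr
        exact Matrix.l2_opNorm_mul _ _
    _ = _ := by rw [one_mul]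

/-- Wedin-type perturbation bound for the pseudoinverse `G` of a matrix `M` of full row rank;
`hG` records that `G M` is symmetric and `G M G = G`. -/
lemma norm_pinv_sub_sq_le (hMG : M * G = 1) (hG : G = Mᵀ * Gᵀ * G) (hQ : IsMPInv (M + E) Q) :
    ‖G - Q‖ ^ 2 ≤ (‖E‖ * ‖G‖ * ‖G‖) ^ 2 + (‖Q‖ * ‖E‖ * ‖G‖) ^ 2 := by
  have hPG := projection_mul_eq (E := E) (Q := Q) hMG
  obtain ⟨h1, h2, -, h4⟩ := hQ
  set P := Q * (M + E) with hPdef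
  have hPP : P * P = P := by rw [hPdef, ← Matrix.mul_assoc, h2]
  have hRs : (1 - P)ᵀ = 1 - P := by rw [Matrix.transpose_sub, h4, Matrix.transpose_one]
  have hRR : (1 - P) * (1 - P) = 1 - P := by
    rw [Matrix.sub_mul, Matrix.mul_sub, Matrix.mul_sub, hPP]; simp
  have hR : ‖1 - P‖ ≤ 1 := norm_le_one_of_symm_idem _ hRs hRR
  have hRQ : (1 - P) * Q = 0 := by rw [Matrix.sub_mul, h2, Matrix.one_mul, sub_self]
  -- The kernel of `M̃` is the range of `1 - P`; transposing, `(1 - P) M̃ᵀ = 0`.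
  have hRM : (1 - P) * Mᵀ = -((1 - P) * Eᵀ) := by
    have h : (M + E) * (1 - P) = 0 := by
      rw [Matrix.mul_sub, hPdef, ← Matrix.mul_assoc, h1, Matrix.mul_one, sub_self]
    have h' := congrArg Matrix.transpose h
    rw [Matrix.transpose_mul, hRs, Matrix.transpose_add, Matrix.mul_add,
      Matrix.transpose_zero] at h'
    exact eq_neg_of_add_eq_zero_left h'
  have hX : (1 - P) * G = -((1 - P) * Eᵀ * Gᵀ * G) := by
    conv_lhs => rw [hG]
    rw [← Matrix.mul_assoc, ← Matrix.mul_assoc, hRM, Matrix.neg_mul, Matrix.neg_mul]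
  have hsplit : G - Q = (1 - P) * G + Q * E * G := by
    rw [Matrix.sub_mul, hPG, Matrix.one_mul]; abel
  have horth : ((1 - P) * G)ᵀ * (Q * E * G) = 0 := by
    rw [Matrix.transpose_mul, hRs, Matrix.mul_assoc, Matrix.mul_assoc Q, ← Matrix.mul_assoc (1 - P),
      hRQ, Matrix.zero_mul, Matrix.mul_zero]
  have hXn : ‖(1 - P) * G‖ ≤ ‖E‖ * ‖G‖ * ‖G‖ := by
    rw [hX, norm_neg]
    calc ‖(1 - P) * Eᵀ * Gᵀ * G‖ ≤ ‖1 - P‖ * ‖Eᵀ‖ * ‖Gᵀ‖ * ‖G‖ := by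
          refine (Matrix.l2_opNorm_mul _ _).trans ?_
          gcongr
          refine (Matrix.l2_opNorm_mul _ _).trans ?_
          gcongr
          exact Matrix.l2_opNorm_mul _ _
      _ ≤ 1 * ‖E‖ * ‖G‖ * ‖G‖ := by
          rw [norm_transpose_l2, norm_transpose_l2]
          gcongr
      _ = _ := by rw [one_mul]
  have hYn : ‖Q * E * G‖ ≤ ‖Q‖ * ‖E‖ * ‖G‖ := by
    refine (Matrix.l2_opNorm_mul _ _).trans ?_
    gcongr
    exact Matrix.l2_opNorm_mul _ _
  rw [hsplit]
  refine (norm_add_sq_le_of_orthogonal _ _ horth).trans ?_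
  gcongr

end Perturbation

/-- The scalar estimate combining the bounds, with `t = Cε`, `g = ‖A†‖`, `a = ‖A‖`, `e = ‖E‖`,
`r = ‖Q‖`, `f = ‖F‖`, `p = ‖P̄‖` and `d = ‖G - Q‖`. -/
lemma scalar_bound {t g a e r f p d : ℝ} (ht : 0 ≤ t) (hg : 0 ≤ g) (ha : 0 ≤ a) (he : 0 ≤ e)
    (hr : 0 ≤ r) (hp : p ≤ r + f) (hc : t * (g * a) < 1) (ht1 : t < 1)
    (hea : e ≤ t * a) (hf : f ≤ t * p) (hrg : r ≤ g + r * e * g)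
    (hd2 : d ^ 2 ≤ (e * g * g) ^ 2 + (r * e * g) ^ 2) :
    d + f ≤ t * g / (1 - t * (g * a)) * (√2 * (g * a) + 1 / (1 - t)) := by
  have hs : 0 < 1 - t * (g * a) := by linarith
  have ht' : 0 < 1 - t := by linarith
  set ρ := g / (1 - t * (g * a)) with hρ
  have hρ0 : 0 ≤ ρ := by positivity
  have hrρ : r ≤ ρ := by
    rw [hρ, le_div_iff₀ hs]
    have : r * e * g ≤ r * (t * a) * g := by gcongr
    linarith
  have hgρ : g ≤ ρ := by
    rw [hρ, le_div_iff₀ hs]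
    have : 0 ≤ g * (t * (g * a)) := by positivity
    linarith
  have hd : d ≤ √2 * (t * a * g * ρ) := by
    refine le_of_sq_le_sq ?_ (by positivity)
    rw [mul_pow, Real.sq_sqrt zero_le_two]
    have h1 : (e * g * g) ^ 2 ≤ (t * a * g * ρ) ^ 2 := by gcongr
    have h2 : (r * e * g) ^ 2 ≤ (t * a * g * ρ) ^ 2 := by
      have : r * e * g ≤ t * a * g * ρ := by
        calc r * e * g ≤ ρ * (t * a) * g := by gcongr
          _ = _ := by ring
      gcongr
    linarith
  have hpr : p ≤ ρ / (1 - t) := by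
    rw [le_div_iff₀ ht']
    linarith
  have hf' : f ≤ t * (ρ / (1 - t)) := hf.trans (by gcongr)
  calc d + f ≤ √2 * (t * a * g * ρ) + t * (ρ / (1 - t)) := add_le_add hd hf'
    _ = t * ρ * (√2 * (g * a) + 1 / (1 - t)) := by ring
    _ = _ := by rw [hρ, mul_div_assoc]

/-- **Floating point error in matrix inversion, applied to a general simplex derivative.**
Under the mixed forward-backward stability hypotheses on the computed pseudoinverse `P̄` of
`Aᵀ` and `Cε*κ(A) < 1`, for any `B ∈ ℝ^{z×(q+1)}` and `v ∈ ℝ^{q+1}`,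
`‖(Aᵀ)†Bv − P̄Bv‖ ≤ (C‖A†‖ε*/(1 − Cκ(A)ε*))·(√2·κ(A) + 1/(1 − Cε*))·‖B‖‖v‖`. -/
theorem matrix_inversion_error_simplex_derivative {n z q : ℕ}
    (εs C : ℝ) (hεs : 0 < εs) (hC : 0 < C)
    (A : Matrix (Fin n) (Fin z) ℝ) (hrank : A.rank = z)
    (Adag : Matrix (Fin z) (Fin n) ℝ) (hAdag : IsMPInv A Adag)
    (κ : ℝ) (hκ : κ = spec Adag * spec A) (hcond : C * εs * κ < 1)
    (Pbar : Matrix (Fin n) (Fin z) ℝ)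
    (Et : Matrix (Fin z) (Fin n) ℝ) (Ft : Matrix (Fin n) (Fin z) ℝ)
    (Q : Matrix (Fin n) (Fin z) ℝ) (hQ : IsMPInv (Aᵀ + Et) Q)
    (hPbar : Pbar + Ft = Q)
    (hEt : spec Et ≤ C * εs * spec A) (hFt : spec Ft ≤ C * εs * spec Pbar)
    (B : Matrix (Fin z) (Fin (q + 1)) ℝ) (v : Fin (q + 1) → ℝ) :
    ‖toE (Matrix.mulVec Adagᵀ (Matrix.mulVec B v))
        - toE (Matrix.mulVec Pbar (Matrix.mulVec B v))‖
      ≤ C * spec Adag * εs / (1 - C * κ * εs) * (Real.sqrt 2 * κ + 1 / (1 - C * εs))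
          * spec B * ‖toE v‖ := by
  have hNA := pinv_mul_eq_one hrank hAdag
  have hrhs : C * spec Adag * εs / (1 - C * κ * εs) * (Real.sqrt 2 * κ + 1 / (1 - C * εs))
      = C * εs * ‖Adag‖ / (1 - C * εs * (‖Adag‖ * ‖A‖))
        * (√2 * (‖Adag‖ * ‖A‖) + 1 / (1 - C * εs)) := by
    rw [hκ, spec_eq_norm, spec_eq_norm]
    ring_nf
  rw [hrhs]
  rw [hκ] at hcond
  simp only [spec_eq_norm] at hcond hEt hFt ⊢
  have hlhs : toE (Adagᵀ *ᵥ (B *ᵥ v)) - toE (Pbar *ᵥ (B *ᵥ v))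
      = toE (((Adagᵀ - Pbar) * B) *ᵥ v) := by
    rw [← Matrix.mulVec_mulVec, Matrix.sub_mulVec]
    rfl
  rcases Nat.eq_zero_or_pos z with rfl | hz
  · -- For `z = 0` the number `1 - Cε` may be negative, but both sides vanish.
    have hA0 : Adag = 0 := Subsingleton.elim _ _
    have hB0 : B = 0 := Subsingleton.elim _ _
    rw [hlhs, hA0, hB0]
    simp [toE]
  have ht : 0 ≤ C * εs := by positivity
  have ht1 : C * εs < 1 := by
    have : Nonempty (Fin z) := ⟨⟨0, hz⟩⟩
    have h1 : (1 : ℝ) ≤ ‖Adag‖ * ‖A‖ := by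
      have h := Matrix.l2_opNorm_mul Adag A
      rwa [hNA, norm_one] at h
    nlinarith
  have hMG : Aᵀ * Adagᵀ = 1 := by rw [← Matrix.transpose_mul, hNA, Matrix.transpose_one]
  have hG : Adagᵀ = Aᵀᵀ * Adagᵀᵀ * Adagᵀ := by
    rw [Matrix.transpose_transpose, Matrix.transpose_transpose]
    conv_lhs => rw [← hAdag.2.1, Matrix.mul_assoc, Matrix.transpose_mul, hAdag.2.2.1]
  have hrg := norm_perturbed_pinv_le hMG hQ
  have hd2 := norm_pinv_sub_sq_le hMG hG hQ
  rw [norm_transpose_l2] at hrg hd2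
  have hp : ‖Pbar‖ ≤ ‖Q‖ + ‖Ft‖ := by
    rw [← add_sub_cancel_right Pbar Ft, hPbar]
    exact norm_sub_le _ _
  have hmain := scalar_bound ht (norm_nonneg Adag) (norm_nonneg A) (norm_nonneg Et)
    (norm_nonneg Q) hp hcond ht1 hEt hFt hrg hd2
  have hGP : ‖Adagᵀ - Pbar‖ ≤ ‖Adagᵀ - Q‖ + ‖Ft‖ := by
    have : Adagᵀ - Pbar = (Adagᵀ - Q) + Ft := by rw [← hPbar]; abel
    rw [this]
    exact norm_add_le _ _
  rw [hlhs]
  calc ‖toE (((Adagᵀ - Pbar) * B) *ᵥ v)‖ ≤ ‖(Adagᵀ - Pbar) * B‖ * ‖toE v‖ :=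
        Matrix.l2_opNorm_mulVec ((Adagᵀ - Pbar) * B) (toE v)
    _ ≤ ‖Adagᵀ - Pbar‖ * ‖B‖ * ‖toE v‖ := by
        gcongr
        exact Matrix.l2_opNorm_mul _ _
    _ ≤ _ := by
        gcongr
        exact hGP.trans hmain
end
end

section
/- Let 0 < ε* and C > 0, let Y⁺ = {y₀, y₀+d₁, …, y₀+d_p} and Y⁻ = {y₀, y₀−d₁, …, y₀−d_p} in ℝⁿ with Δ = maxᵢ‖dᵢ‖ > 0 and Y = Y⁺ ∪ Y⁻, let L⁺ = [d₁ ⋯ d_p] ∈ ℝ^{n×p} have full column rank, set A = 2L⁺ with κ(L⁺) = ‖(L⁺)†‖‖L⁺‖ satisfying Cε*κ(L⁺) < 1, and let B = [𝟘 I_p −I_p] ∈ ℝ^{p×(2p+1)}. Suppose P̄ ∈ ℝ^{n×p} is such that there exist Ẽ ∈ ℝ^{p×n} and F̃ ∈ ℝ^{n×p} with P̄ + F̃ = (Aᵀ + Ẽ)†, ‖Ẽ‖ ≤ Cε*‖A‖, ‖F̃‖ ≤ Cε*‖P̄‖, and suppose f̄(y) = (1+ε_y)f(y) with |ε_y| ≤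 ε* for every y ∈ Y. Let f_M = max{|f(y)| : y ∈ Y}, 𝕗 = (f(y₀), f(y₀+d₁),…,f(y₀+d_p), f(y₀−d₁),…,f(y₀−d_p))ᵀ, 𝕗̄ the corresponding vector of f̄ values, and L̂⁺ = L⁺/Δ. Then ‖(Aᵀ)†B𝕗 − P̄B𝕗̄‖ ≤ (√(4p+2)/2)·f_M·‖(L̂⁺)†‖·ε*·( √2·C·κ(L⁺)/(1 − Cκ(L⁺)ε*) + (C+1)/((1 − Cε*)(1 − Cκ(L⁺)ε*)) )·(1/Δ). -/
/-!
The exact and computed gradients differ by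

  `(Aᵀ)†B𝕗 − P̄B𝕗̄ = ((Aᵀ)† − (Aᵀ + Ẽ)†)B𝕗 + F̃B𝕗 + P̄B(𝕗 − 𝕗̄)`.

The vectors `B𝕗` and `B(𝕗 − 𝕗̄)` have norm at most `√(4p+2) f_M` and `√(4p+2) ε* f_M`
(`norm_centredDiff_le`), and `‖P̄‖ ≤ ‖(Aᵀ + Ẽ)†‖ / (1 − Cε*)` follows from the bound on `F̃`; here
`Cε* < 1` because `κ(L⁺) ≥ 1`. What remains is perturbation theory for the pseudoinverse
(`spec_pinv_perturb`, applied to the transposes, which have full column rank).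

Let `X` have left inverse `X†` of norm `a`, let `‖Y − X‖ ≤ g` with `a g < 1`, and let `P_X`, `P_Y`
be the orthogonal projections onto the ranges. Then `(1 − a g)‖u‖ ≤ a‖Y u‖`, so `Y†Y = 1` and
`‖Y†‖ ≤ a / (1 − a g)`. Wedin's bound `‖X† − Y†‖ ≤ √2 a² g / (1 − a g)` comes from

  `X† − Y† = Y†(Y − X)X† − Y†(1 − P_X)`,

whose two terms act on the orthogonal vectors `P_X v` and `v − P_X v`; this gives the factor `√2`.
The second term needs `‖P_Y(1 − P_X)‖ ≤ a g`. The estimate `‖(1 − P_Y)P_X‖ ≤ a g` is immediate,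
and it transfers since the two ranges have the same dimension (`norm_sub_proj_perturb_le`).
-/

open scoped Matrix
noncomputable section

/-! ### Perturbation of pseudoinverses of injective maps -/

section Perturbation
variable {E F : Type*} [NormedAddCommGroup E] [InnerProductSpace ℝ E]
  [NormedAddCommGroup F] [InnerProductSpace ℝ F]

lemma norm_sq_add_norm_sq_proj (P : F →ₗ[ℝ] F) (hP : ∀ v, P (P v) = P v)
    (hs : ∀ v w, inner ℝ (P v) w = inner ℝ v (P w)) (v : F) :
    ‖P v‖ ^ 2 + ‖v - P v‖ ^ 2 = ‖v‖ ^ 2 := by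
  have h1 : inner ℝ v (P v) = ‖P v‖ ^ 2 := by
    rw [← real_inner_self_eq_norm_sq, hs, hP]
  rw [norm_sub_sq_real, h1]; ring

lemma norm_proj_le (P : F →ₗ[ℝ] F) (hP : ∀ v, P (P v) = P v)
    (hs : ∀ v w, inner ℝ (P v) w = inner ℝ v (P w)) (v : F) : ‖P v‖ ≤ ‖v‖ := by
  have := norm_sq_add_norm_sq_proj P hP hs v
  exact le_of_sq_le_sq (by nlinarith [sq_nonneg ‖v - P v‖]) (norm_nonneg _)

lemma norm_sub_proj_le (P : F →ₗ[ℝ] F) (hP : ∀ v, P (P v) = P v)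
    (hs : ∀ v w, inner ℝ (P v) w = inner ℝ v (P w)) (v : F) : ‖v - P v‖ ≤ ‖v‖ := by
  have := norm_sq_add_norm_sq_proj P hP hs v
  exact le_of_sq_le_sq (by nlinarith [sq_nonneg ‖P v‖]) (norm_nonneg _)

/-- A perturbation `Y` of the left-invertible map `X` stays bounded below when `a g < 1`. -/
lemma norm_le_of_perturb (X Y : E →ₗ[ℝ] F) (Xd : F →ₗ[ℝ] E) (hX : ∀ u, Xd (X u) = u)
    {a g : ℝ} (ha0 : 0 ≤ a) (ha : ∀ v, ‖Xd v‖ ≤ a * ‖v‖)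
    (hg : ∀ u, ‖Y u - X u‖ ≤ g * ‖u‖) (u : E) :
    (1 - a * g) * ‖u‖ ≤ a * ‖Y u‖ := by
  have h1 : ‖u‖ ≤ a * ‖X u‖ := by simpa [hX] using ha (X u)
  have h2 : ‖X u‖ ≤ ‖Y u‖ + ‖Y u - X u‖ := by
    have := norm_sub_le (Y u) (Y u - X u); simpa using this
  nlinarith [hg u, mul_le_mul_of_nonneg_left (h2.trans (add_le_add_right (hg u) _)) ha0]

lemma leftInverse_of_perturb (X Y : E →ₗ[ℝ] F) (Xd Yd : F →ₗ[ℝ] E) (hX : ∀ u, Xd (X u) = u)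
    (hY : ∀ u, Y (Yd (Y u)) = Y u)
    {a g : ℝ} (ha0 : 0 ≤ a) (ha : ∀ v, ‖Xd v‖ ≤ a * ‖v‖)
    (hg : ∀ u, ‖Y u - X u‖ ≤ g * ‖u‖) (hag : a * g < 1) (u : E) : Yd (Y u) = u := by
  have h := norm_le_of_perturb X Y Xd hX ha0 ha hg (Yd (Y u) - u)
  rw [map_sub, hY, sub_self, norm_zero, mul_zero] at h
  have : ‖Yd (Y u) - u‖ ≤ 0 := by
    by_contra hc
    nlinarith [mul_pos (sub_pos.2 hag) (not_le.1 hc)]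
  exact sub_eq_zero.1 (norm_le_zero_iff.1 this)

/-- When `a g < 1`, this says that the pseudoinverse `Yd` of the perturbation `Y` satisfies
`‖Yd‖ ≤ a / (1 - a g)`; it holds because `Y ∘ Yd` is an orthogonal projection. -/
lemma norm_pinv_perturb_le (X Y : E →ₗ[ℝ] F) (Xd Yd : F →ₗ[ℝ] E) (hX : ∀ u, Xd (X u) = u)
    (hY : ∀ u, Y (Yd (Y u)) = Y u)
    (hYs : ∀ v w, inner ℝ (Y (Yd v)) w = inner ℝ v (Y (Yd w)))
    {a g : ℝ} (ha0 : 0 ≤ a) (ha : ∀ v, ‖Xd v‖ ≤ a * ‖v‖)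
    (hg : ∀ u, ‖Y u - X u‖ ≤ g * ‖u‖) (v : F) : (1 - a * g) * ‖Yd v‖ ≤ a * ‖v‖ :=
  (norm_le_of_perturb X Y Xd hX ha0 ha hg (Yd v)).trans
    (mul_le_mul_of_nonneg_left (norm_proj_le (Y ∘ₗ Yd) (fun v => hY (Yd v)) hYs v) ha0)

/-- The sine of the largest angle is symmetric for subspaces of equal dimension: the range of `Y`
deviates from the range of `X` by at most `a g`, because the range of `X` deviates from the range
of `Y` by at most `a g` and `Yd ∘ X`, being an injective endomorphism, is onto. -/
lemma norm_sub_proj_perturb_le [FiniteDimensional ℝ E]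
    (X Y : E →ₗ[ℝ] F) (Xd Yd : F →ₗ[ℝ] E) (hX : ∀ u, Xd (X u) = u)
    (hXs : ∀ v w, inner ℝ (X (Xd v)) w = inner ℝ v (X (Xd w)))
    (hY : ∀ u, Y (Yd (Y u)) = Y u)
    (hYs : ∀ v w, inner ℝ (Y (Yd v)) w = inner ℝ v (Y (Yd w)))
    {a g : ℝ} (ha0 : 0 ≤ a) (hg0 : 0 ≤ g) (ha : ∀ v, ‖Xd v‖ ≤ a * ‖v‖)
    (hg : ∀ u, ‖Y u - X u‖ ≤ g * ‖u‖) (hag : a * g < 1) (u : E) :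
    ‖Y u - X (Xd (Y u))‖ ≤ a * g * ‖Y u‖ := by
  have hs0 : 0 ≤ a * g := mul_nonneg ha0 hg0
  have hPY : ∀ v, (Y ∘ₗ Yd) ((Y ∘ₗ Yd) v) = (Y ∘ₗ Yd) v := fun v => hY (Yd v)
  have hPX : ∀ v, (X ∘ₗ Xd) ((X ∘ₗ Xd) v) = (X ∘ₗ Xd) v := fun v => by simp [hX]
  have h5 : ∀ w, ‖X w - Y (Yd (X w))‖ ≤ a * g * ‖X w‖ := by
    intro w
    have e : X w - Y (Yd (X w)) = (X w - Y w) - Y (Yd (X w - Y w)) := by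
      simp only [map_sub, hY]; abel
    have h1 : ‖w‖ ≤ a * ‖X w‖ := by simpa [hX] using ha (X w)
    rw [e]
    refine (norm_sub_proj_le (Y ∘ₗ Yd) hPY hYs (X w - Y w)).trans ?_
    rw [norm_sub_rev]
    nlinarith [hg w, mul_le_mul_of_nonneg_left h1 hg0]
  have hinj : Function.Injective (Yd ∘ₗ X) := by
    rw [injective_iff_map_eq_zero]
    intro w hw
    have hw' : Yd (X w) = 0 := hw
    have h := h5 w
    rw [hw', map_zero, sub_zero] at h
    have : ‖X w‖ ≤ 0 := by
      by_contra hc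
      nlinarith [mul_pos (sub_pos.2 hag) (not_le.1 hc)]
    rw [← hX w, norm_le_zero_iff.1 this, map_zero]
  obtain ⟨w, hw⟩ := (LinearMap.injective_iff_surjective.1 hinj) u
  have hw' : Yd (X w) = u := hw
  have hx := norm_sq_add_norm_sq_proj (Y ∘ₗ Yd) hPY hYs (X w)
  have hy := norm_sq_add_norm_sq_proj (X ∘ₗ Xd) hPX hXs (Y u)
  have h5w := h5 w
  simp only [LinearMap.comp_apply, hw'] at hx hy h5w
  -- `‖Y u‖² = ⟪Y u, X w⟫ = ⟪P_X (Y u), X w⟫`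
  have hin : ‖Y u‖ ^ 2 ≤ ‖X (Xd (Y u))‖ * ‖X w‖ := by
    have e1 : inner ℝ (X (Xd (Y u))) (X w) = ‖Y u‖ ^ 2 := by
      rw [hXs, hX, ← real_inner_self_eq_norm_sq]
      have := hYs (Y u) (X w)
      rw [hY, hw'] at this
      exact this
    rw [← e1]; exact real_inner_le_norm _ _
  have hxs : ‖X w - Y u‖ ^ 2 ≤ (a * g) ^ 2 * ‖X w‖ ^ 2 := by
    rw [← mul_pow]; exact pow_le_pow_left₀ (norm_nonneg _) h5w 2
  have hlow : (1 - (a * g) ^ 2) * ‖Y u‖ ^ 2 ≤ ‖X (Xd (Y u))‖ ^ 2 := by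
    rcases (norm_nonneg (Y u)).eq_or_lt with h0 | h0
    · rw [← h0]; nlinarith [sq_nonneg ‖X (Xd (Y u))‖]
    · have h4 : (‖Y u‖ ^ 2) ^ 2 ≤ ‖X (Xd (Y u))‖ ^ 2 * ‖X w‖ ^ 2 := by
        rw [← mul_pow]; exact pow_le_pow_left₀ (sq_nonneg _) hin 2
      have h6 : (1 - (a * g) ^ 2) * ‖X w‖ ^ 2 ≤ ‖Y u‖ ^ 2 := by linarith
      have h7 : 0 ≤ 1 - (a * g) ^ 2 := by nlinarith
      have h8 : ((1 - (a * g) ^ 2) * ‖Y u‖ ^ 2) * ‖Y u‖ ^ 2 ≤ ‖X (Xd (Y u))‖ ^ 2 * ‖Y u‖ ^ 2 := by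
        nlinarith [mul_le_mul_of_nonneg_left h4 h7,
          mul_le_mul_of_nonneg_left h6 (sq_nonneg ‖X (Xd (Y u))‖)]
      exact le_of_mul_le_mul_right h8 (by positivity)
  refine le_of_sq_le_sq ?_ (by positivity)
  rw [mul_pow]; linarith

/-- Wedin's bound `‖Xd - Yd‖ ≤ √2 a² g / (1 - a g)`, with the denominator cleared, for the
pseudoinverse of an injective map. -/
lemma norm_pinv_sub_pinv_le [FiniteDimensional ℝ E]
    (X Y : E →ₗ[ℝ] F) (Xd Yd : F →ₗ[ℝ] E) (hX : ∀ u, Xd (X u) = u)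
    (hXs : ∀ v w, inner ℝ (X (Xd v)) w = inner ℝ v (X (Xd w)))
    (hY : ∀ u, Y (Yd (Y u)) = Y u)
    (hYs : ∀ v w, inner ℝ (Y (Yd v)) w = inner ℝ v (Y (Yd w)))
    {a g : ℝ} (ha0 : 0 ≤ a) (hg0 : 0 ≤ g) (ha : ∀ v, ‖Xd v‖ ≤ a * ‖v‖)
    (hg : ∀ u, ‖Y u - X u‖ ≤ g * ‖u‖) (hag : a * g < 1) (v : F) :
    (1 - a * g) * ‖Xd v - Yd v‖ ≤ √2 * (a * (a * g)) * ‖v‖ := by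
  have hs0 : 0 ≤ a * g := mul_nonneg ha0 hg0
  have hPX : ∀ v, (X ∘ₗ Xd) ((X ∘ₗ Xd) v) = (X ∘ₗ Xd) v := fun v => by simp [hX]
  have hYl := leftInverse_of_perturb X Y Xd Yd hX hY ha0 ha hg hag
  have hpyth := norm_sq_add_norm_sq_proj (X ∘ₗ Xd) hPX hXs v
  simp only [LinearMap.comp_apply] at hpyth
  set z := v - X (Xd v) with hz
  have hXz : Xd z = 0 := by simp [hz, hX]
  -- `‖P_Y z‖² = ⟪P_Y z - P_X (P_Y z), z⟫` because `z` is orthogonal to the range of `X`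
  have hPYz : ‖Y (Yd z)‖ ≤ a * g * ‖z‖ := by
    have e : ‖Y (Yd z)‖ ^ 2 = inner ℝ (Y (Yd z) - X (Xd (Y (Yd z)))) z := by
      rw [inner_sub_left, hXs, hXz, map_zero, inner_zero_right, sub_zero,
        ← real_inner_self_eq_norm_sq, hYs, hYl, real_inner_comm]
    have h1 := real_inner_le_norm (Y (Yd z) - X (Xd (Y (Yd z)))) z
    rw [← e] at h1
    have h2 := norm_sub_proj_perturb_le X Y Xd Yd hX hXs hY hYs ha0 hg0 ha hg hag (Yd z)
    have h3 := mul_le_mul_of_nonneg_right h2 (norm_nonneg z)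
    by_contra hc
    have hpos : 0 < ‖Y (Yd z)‖ := lt_of_le_of_lt (by positivity) (not_le.1 hc)
    nlinarith [mul_pos hpos (sub_pos.2 (not_le.1 hc))]
  have hz1 : (1 - a * g) * ‖Yd z‖ ≤ a * (a * g * ‖z‖) :=
    (norm_le_of_perturb X Y Xd hX ha0 ha hg (Yd z)).trans (mul_le_mul_of_nonneg_left hPYz ha0)
  have hw1 : (1 - a * g) * ‖Yd (Y (Xd v) - X (Xd v))‖ ≤ a * (a * g * ‖X (Xd v)‖) := by
    refine (norm_pinv_perturb_le X Y Xd Yd hX hY hYs ha0 ha hg _).trans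
      (mul_le_mul_of_nonneg_left ?_ ha0)
    have h1 : ‖Xd v‖ ≤ a * ‖X (Xd v)‖ := by simpa [hX] using ha (X (Xd v))
    nlinarith [hg (Xd v), mul_le_mul_of_nonneg_left h1 hg0]
  have e : Xd v - Yd v = Yd (Y (Xd v) - X (Xd v)) - Yd z := by
    simp only [hz, map_sub, hYl]; abel
  have htri : ‖Xd v - Yd v‖ ≤ ‖Yd (Y (Xd v) - X (Xd v))‖ + ‖Yd z‖ := by
    rw [e]; exact norm_sub_le _ _
  have hsum : ‖X (Xd v)‖ + ‖z‖ ≤ √2 * ‖v‖ := by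
    refine le_of_sq_le_sq ?_ (by positivity)
    rw [mul_pow, Real.sq_sqrt (by norm_num), ← hpyth]
    nlinarith [sq_nonneg (‖X (Xd v)‖ - ‖z‖)]
  calc (1 - a * g) * ‖Xd v - Yd v‖
      ≤ a * (a * g) * (‖X (Xd v)‖ + ‖z‖) := by
        nlinarith [mul_le_mul_of_nonneg_left htri (sub_pos.2 hag).le]
    _ ≤ a * (a * g) * (√2 * ‖v‖) := mul_le_mul_of_nonneg_left hsum (by positivity)
    _ = _ := by ring
end Perturbation

/-! ### Spectral norm and pseudoinverses of matrices -/

section SpectralNorm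
open scoped Matrix.Norms.L2Operator

lemma spec_nonneg {m n : ℕ} (A : Matrix (Fin m) (Fin n) ℝ) : 0 ≤ spec A := norm_nonneg _

lemma spec_smul {m n : ℕ} {c : ℝ} (hc : 0 ≤ c) (A : Matrix (Fin m) (Fin n) ℝ) :
    spec (c • A) = c * spec A := by
  rw [spec_eq_norm, spec_eq_norm, norm_smul, Real.norm_of_nonneg hc]

lemma spec_sub_le {m n : ℕ} (A B : Matrix (Fin m) (Fin n) ℝ) :
    spec (A - B) ≤ spec A + spec B := norm_sub_le A B

lemma spec_transpose {m n : ℕ} (A : Matrix (Fin m) (Fin n) ℝ) : spec Aᵀ = spec A := by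
  rw [spec_eq_norm, spec_eq_norm, ← Matrix.l2_opNorm_conjTranspose A,
    Matrix.conjTranspose_eq_transpose_of_trivial]

lemma norm_toE_mulVec_le {m n : ℕ} (A : Matrix (Fin m) (Fin n) ℝ) (v : Fin n → ℝ) :
    ‖toE (A *ᵥ v)‖ ≤ spec A * ‖toE v‖ :=
  A.l2_opNorm_mulVec (toE v)

end SpectralNorm

lemma toE_sub {n : ℕ} (v w : Fin n → ℝ) : toE (v - w) = toE v - toE w := rfl

lemma toE_add {n : ℕ} (v w : Fin n → ℝ) : toE (v + w) = toE v + toE w := rfl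

lemma norm_toE_le {m : ℕ} (w : Fin m → ℝ) {c : ℝ} (hc : 0 ≤ c) (h : ∀ i, |w i| ≤ c) :
    ‖toE w‖ ≤ √m * c := by
  refine le_of_sq_le_sq ?_ (by positivity)
  rw [EuclideanSpace.norm_sq_eq, mul_pow, Real.sq_sqrt (by positivity)]
  calc ∑ i, ‖(toE w) i‖ ^ 2 ≤ ∑ _i : Fin m, c ^ 2 :=
        Finset.sum_le_sum fun i _ => pow_le_pow_left₀ (norm_nonneg _) (h i) 2
    _ = m * c ^ 2 := by simp

lemma toEuclideanLin_mul_apply {m n k : ℕ} (A : Matrix (Fin m) (Fin n) ℝ)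
    (B : Matrix (Fin n) (Fin k) ℝ) (v : EuclideanSpace ℝ (Fin k)) :
    Matrix.toEuclideanLin A (Matrix.toEuclideanLin B v) = Matrix.toEuclideanLin (A * B) v := by
  simp [Matrix.toLpLin_apply, Matrix.mulVec_mulVec]

lemma inner_toEuclideanLin_of_symm {n : ℕ} (S : Matrix (Fin n) (Fin n) ℝ) (hS : Sᵀ = S)
    (v w : EuclideanSpace ℝ (Fin n)) :
    inner ℝ (Matrix.toEuclideanLin S v) w = inner ℝ v (Matrix.toEuclideanLin S w) := by
  have h := Matrix.toEuclideanLin_conjTranspose_eq_adjoint S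
  rw [Matrix.conjTranspose_eq_transpose_of_trivial, hS] at h
  conv_lhs => rw [h]
  exact LinearMap.adjoint_inner_left _ _ _

/-- Matrix form of the perturbation bounds: `‖Y†‖ ≤ ‖X†‖ / (1 - ‖X†‖ g)` and
`‖X† - Y†‖ ≤ √2 ‖X†‖² g / (1 - ‖X†‖ g)`, with denominators cleared. -/
lemma spec_pinv_perturb {n p : ℕ} (X Y : Matrix (Fin n) (Fin p) ℝ)
    (Xd Yd : Matrix (Fin p) (Fin n) ℝ) (hX : Xd * X = 1) (hXs : (X * Xd)ᵀ = X * Xd)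
    (hY : Y * Yd * Y = Y) (hYs : (Y * Yd)ᵀ = Y * Yd) {g : ℝ}
    (hg : spec (Y - X) ≤ g) (hag : spec Xd * g < 1) :
    (1 - spec Xd * g) * spec Yd ≤ spec Xd ∧
    (1 - spec Xd * g) * spec (Xd - Yd) ≤ √2 * (spec Xd * (spec Xd * g)) := by
  have ha0 := spec_nonneg Xd
  have hg0 : 0 ≤ g := (spec_nonneg _).trans hg
  have hpos : 0 < 1 - spec Xd * g := sub_pos.2 hag
  have hX' : ∀ u, Matrix.toEuclideanLin Xd (Matrix.toEuclideanLin X u) = u := fun u => by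
    rw [toEuclideanLin_mul_apply, hX]; simp
  have hXs' : ∀ v w, inner ℝ (Matrix.toEuclideanLin X (Matrix.toEuclideanLin Xd v)) w
      = inner ℝ v (Matrix.toEuclideanLin X (Matrix.toEuclideanLin Xd w)) := fun v w => by
    rw [toEuclideanLin_mul_apply, toEuclideanLin_mul_apply]
    exact inner_toEuclideanLin_of_symm _ hXs v w
  have hYs' : ∀ v w, inner ℝ (Matrix.toEuclideanLin Y (Matrix.toEuclideanLin Yd v)) w
      = inner ℝ v (Matrix.toEuclideanLin Y (Matrix.toEuclideanLin Yd w)) := fun v w => by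
    rw [toEuclideanLin_mul_apply, toEuclideanLin_mul_apply]
    exact inner_toEuclideanLin_of_symm _ hYs v w
  have hY' : ∀ u, Matrix.toEuclideanLin Y (Matrix.toEuclideanLin Yd (Matrix.toEuclideanLin Y u))
      = Matrix.toEuclideanLin Y u := fun u => by
    rw [toEuclideanLin_mul_apply, toEuclideanLin_mul_apply, hY]
  have ha : ∀ v, ‖Matrix.toEuclideanLin Xd v‖ ≤ spec Xd * ‖v‖ := fun v =>
    (LinearMap.toContinuousLinearMap (Matrix.toEuclideanLin Xd)).le_opNorm v
  have hg' : ∀ u, ‖Matrix.toEuclideanLin Y u - Matrix.toEuclideanLin X u‖ ≤ g * ‖u‖ := fun u => by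
    rw [← LinearMap.sub_apply, ← map_sub]
    exact ((LinearMap.toContinuousLinearMap (Matrix.toEuclideanLin (Y - X))).le_opNorm u).trans
      (mul_le_mul_of_nonneg_right hg (norm_nonneg _))
  constructor
  · rw [mul_comm, ← le_div_iff₀ hpos]
    refine ContinuousLinearMap.opNorm_le_bound _ (by positivity) fun v => ?_
    rw [div_mul_eq_mul_div, le_div_iff₀ hpos, mul_comm]
    exact norm_pinv_perturb_le _ _ _ _ hX' hY' hYs' ha0 ha hg' v
  · rw [mul_comm, ← le_div_iff₀ hpos]
    refine ContinuousLinearMap.opNorm_le_bound _ (by positivity) fun v => ?_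
    rw [div_mul_eq_mul_div, le_div_iff₀ hpos, mul_comm, map_sub]
    exact norm_pinv_sub_pinv_le _ _ _ _ hX' hXs' hY' hYs' ha0 hg0 ha hg' hag v

lemma IsMPInv.mul_eq_one {n p : ℕ} {M : Matrix (Fin n) (Fin p) ℝ} {N : Matrix (Fin p) (Fin n) ℝ}
    (h : IsMPInv M N) (hr : M.rank = p) : N * M = 1 := by
  have hinj : Function.Injective M.mulVec := by
    rw [Matrix.mulVec_injective_iff]
    rw [linearIndependent_iff_card_eq_finrank_span, Set.finrank,
      ← Matrix.rank_eq_finrank_span_cols, hr, Fintype.card_fin]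
  refine Matrix.ext_iff_mulVec.2 fun v => hinj ?_
  rw [Matrix.mulVec_mulVec, ← Matrix.mul_assoc, h.1, Matrix.one_mulVec]

/-- A left inverse `N` of `M` with `M N` symmetric is the pseudoinverse of `M`. -/
lemma IsMPInv.eq_of_mul_eq_one {n p : ℕ} {M : Matrix (Fin n) (Fin p) ℝ}
    {N N' : Matrix (Fin p) (Fin n) ℝ} (h : IsMPInv M N') (h1 : N * M = 1)
    (hs : (M * N)ᵀ = M * N) : N' = N := by
  have e1 : M * N' = M * N := by
    calc M * N' = (M * N) * (M * N') := by
          rw [Matrix.mul_assoc M N, ← Matrix.mul_assoc N M, h1, Matrix.one_mul]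
      _ = ((M * N' * M) * N)ᵀ := by
          rw [Matrix.mul_assoc (M * N') M N, Matrix.transpose_mul, hs, h.2.2.1]
      _ = M * N := by rw [h.1, hs]
  calc N' = N * M * N' := by rw [h1, Matrix.one_mul]
    _ = N * M * N := by rw [Matrix.mul_assoc, e1, ← Matrix.mul_assoc]
    _ = N := by rw [h1, Matrix.one_mul]

lemma IsMPInv.transpose {m n : ℕ} {M : Matrix (Fin m) (Fin n) ℝ} {N : Matrix (Fin n) (Fin m) ℝ}
    (h : IsMPInv M N) : IsMPInv Mᵀ Nᵀ := by
  obtain ⟨h1, h2, h3, h4⟩ := h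
  refine ⟨?_, ?_, ?_, ?_⟩
  · rw [← Matrix.transpose_mul, ← Matrix.transpose_mul, ← Matrix.mul_assoc, h1]
  · rw [← Matrix.transpose_mul, ← Matrix.transpose_mul, ← Matrix.mul_assoc, h2]
  · rw [← Matrix.transpose_mul, h4, h4]
  · rw [← Matrix.transpose_mul, h3, h3]

/-! ### The error bound -/

/-- The centred difference matrix `B = [𝟘 I_p −I_p]` maps a vector with entries bounded by `c` to
one with entries bounded by `2c`, hence of norm at most `√(4p) c ≤ √(4p + 2) c`. -/
lemma norm_centredDiff_le {p : ℕ} (B : Matrix (Fin p) (Fin (2 * p + 1)) ℝ)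
    (hB : B = Matrix.of fun (i : Fin p) (j : Fin (2 * p + 1)) =>
      if (j : ℕ) = 0 then (0 : ℝ)
      else if (j : ℕ) = (i : ℕ) + 1 then 1
      else if (j : ℕ) = p + (i : ℕ) + 1 then -1 else 0)
    (v : Fin (2 * p + 1) → ℝ) {c : ℝ} (hc : 0 ≤ c) (hv : ∀ j, |v j| ≤ c) :
    ‖toE (B *ᵥ v)‖ ≤ √(4 * p + 2) * c := by
  have hBv : ∀ i : Fin p, (B *ᵥ v) i
      = v ⟨(i : ℕ) + 1, by omega⟩ - v ⟨p + (i : ℕ) + 1, by omega⟩ := by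
    intro i
    have hij : ∀ j, B i j = (if j = ⟨(i : ℕ) + 1, by omega⟩ then (1 : ℝ) else 0)
        - (if j = ⟨p + (i : ℕ) + 1, by omega⟩ then (1 : ℝ) else 0) := by
      intro j
      have hi := i.2
      simp only [hB, Matrix.of_apply, Fin.ext_iff]
      split_ifs <;> first | omega | norm_num
    simp [Matrix.mulVec, dotProduct, hij, sub_mul, Finset.sum_sub_distrib]
  have h2 : ∀ i, |(B *ᵥ v) i| ≤ 2 * c := fun i => by
    rw [hBv]
    exact (abs_sub _ _).trans
      (by linarith [hv ⟨(i : ℕ) + 1, by omega⟩, hv ⟨p + (i : ℕ) + 1, by omega⟩])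
  refine (norm_toE_le _ (by positivity) h2).trans ?_
  rw [← mul_assoc]
  refine mul_le_mul_of_nonneg_right ?_ hc
  refine Real.le_sqrt_of_sq_le ?_
  rw [mul_pow, Real.sq_sqrt (by positivity)]; linarith

/-- **Floating point error bound for the generalized centred simplex gradient.**
With `A = 2L⁺`, `B = [𝟘 I_p −I_p]`, `Δ = maxᵢ‖dᵢ‖` and `L̂⁺ = L⁺/Δ` (so `(L̂⁺)† = Δ·(L⁺)†`),
`‖(Aᵀ)†B𝕗 − P̄B𝕗̄‖ ≤ (√(4p+2)/2)·f_M·‖(L̂⁺)†‖·ε*·(√2Cκ(L⁺)/(1 − Cκ(L⁺)ε*)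
  + (C+1)/((1 − Cε*)(1 − Cκ(L⁺)ε*)))·(1/Δ)`. -/
theorem gcsg_floating_point_error {n p : ℕ} (εs C : ℝ) (hεs : 0 < εs) (hC : 0 < C)
    (y₀ : EuclideanSpace ℝ (Fin n)) (d : Fin p → EuclideanSpace ℝ (Fin n))
    (Δ : ℝ) (hΔ : Δ = ⨆ i, ‖d i‖) (hΔpos : 0 < Δ)
    (Lp : Matrix (Fin n) (Fin p) ℝ) (hLp : Lp = Matrix.of fun i j => d j i)
    (hrank : Lp.rank = p)
    (Lpdag : Matrix (Fin p) (Fin n) ℝ) (hLpdag : IsMPInv Lp Lpdag)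
    (κ : ℝ) (hκ : κ = spec Lpdag * spec Lp) (hcond : C * εs * κ < 1)
    (A : Matrix (Fin n) (Fin p) ℝ) (hA : A = (2 : ℝ) • Lp)
    (Adag : Matrix (Fin p) (Fin n) ℝ) (hAdag : IsMPInv A Adag)
    (B : Matrix (Fin p) (Fin (2 * p + 1)) ℝ)
    (hB : B = Matrix.of fun (i : Fin p) (j : Fin (2 * p + 1)) =>
      if (j : ℕ) = 0 then (0 : ℝ)
      else if (j : ℕ) = (i : ℕ) + 1 then 1
      else if (j : ℕ) = p + (i : ℕ) + 1 then -1 else 0)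
    (Pbar : Matrix (Fin n) (Fin p) ℝ)
    (Et : Matrix (Fin p) (Fin n) ℝ) (Ft : Matrix (Fin n) (Fin p) ℝ)
    (Q : Matrix (Fin n) (Fin p) ℝ) (hQ : IsMPInv (Aᵀ + Et) Q)
    (hPbar : Pbar + Ft = Q)
    (hEt : spec Et ≤ C * εs * spec A) (hFt : spec Ft ≤ C * εs * spec Pbar)
    (y : Fin (2 * p + 1) → EuclideanSpace ℝ (Fin n))
    (hy : ∀ j : Fin (2 * p + 1), y j =
      if h0 : (j : ℕ) = 0 then y₀
      else if h1 : (j : ℕ) ≤ p then y₀ + d ⟨(j : ℕ) - 1, by omega⟩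
      else y₀ - d ⟨(j : ℕ) - p - 1, by omega⟩)
    (f fbar : EuclideanSpace ℝ (Fin n) → ℝ)
    (ε : Fin (2 * p + 1) → ℝ) (hε : ∀ i, |ε i| ≤ εs)
    (hfbar : ∀ i, fbar (y i) = (1 + ε i) * f (y i))
    (fM : ℝ) (hfM : fM = ⨆ i, |f (y i)|) :
    ‖toE (Matrix.mulVec Adagᵀ (Matrix.mulVec B fun i => f (y i)))
        - toE (Matrix.mulVec Pbar (Matrix.mulVec B fun i => fbar (y i)))‖
      ≤ Real.sqrt (4 * p + 2) / 2 * fM * spec (Δ • Lpdag) * εs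
          * (Real.sqrt 2 * C * κ / (1 - C * κ * εs)
              + (C + 1) / ((1 - C * εs) * (1 - C * κ * εs))) * (1 / Δ) := by
  have hp : 0 < p := by
    rcases Nat.eq_zero_or_pos p with h | h
    · subst h; simp [Real.iSup_of_isEmpty] at hΔ; linarith
    · exact h
  have hleft : Lpdag * Lp = 1 := hLpdag.mul_eq_one hrank
  have hAd : Adag = (1 / 2 : ℝ) • Lpdag := by
    refine hAdag.eq_of_mul_eq_one ?_ ?_
    · rw [hA]; simp [hleft, smul_smul]
    · rw [hA]; simp [hLpdag.2.2.1, smul_smul]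
  have hAl : Adag * A = 1 := by rw [hAd, hA]; simp [hleft, smul_smul]
  have hsAd : spec Adag = spec Lpdag / 2 := by
    rw [hAd, spec_smul (by norm_num)]; ring
  have hsA : spec A = 2 * spec Lp := by rw [hA, spec_smul (by norm_num)]
  have hag : spec Adag * (C * εs * spec A) = C * κ * εs := by rw [hsAd, hsA, hκ]; ring
  have hκ1 : 1 ≤ κ := by
    let e : Fin p → ℝ := Pi.single ⟨0, hp⟩ 1
    have he : ‖toE e‖ = 1 := by
      have := PiLp.norm_single 2 (fun _ : Fin p => ℝ) ⟨0, hp⟩ 1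
      rw [norm_one] at this
      exact this
    have h1 := norm_toE_mulVec_le Lpdag (Lp *ᵥ e)
    rw [Matrix.mulVec_mulVec, hleft, Matrix.one_mulVec, he] at h1
    have h2 := norm_toE_mulVec_le Lp e
    rw [he, mul_one] at h2
    rw [hκ]
    exact h1.trans (mul_le_mul_of_nonneg_left h2 (spec_nonneg _))
  have hCκ : 0 < 1 - C * κ * εs := by nlinarith
  have hCε : 0 < 1 - C * εs := by nlinarith [mul_pos hC hεs]
  have hQt := hQ.transpose
  have hsub : spec ((Aᵀ + Et)ᵀ - A) ≤ C * εs * spec A := by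
    rw [Matrix.transpose_add, Matrix.transpose_transpose, add_sub_cancel_left, spec_transpose]
    exact hEt
  obtain ⟨hQn, hQd⟩ := spec_pinv_perturb A (Aᵀ + Et)ᵀ Adag Qᵀ hAl hAdag.2.2.1 hQt.1 hQt.2.2.1
    hsub (by rw [hag]; linarith)
  rw [hag] at hQn hQd
  rw [spec_transpose] at hQn
  rw [← spec_transpose (Adag - Qᵀ), Matrix.transpose_sub, Matrix.transpose_transpose] at hQd
  have hPn : (1 - C * εs) * spec Pbar ≤ spec Q := by
    have h := spec_sub_le Q Ft
    rw [← hPbar, add_sub_cancel_right, hPbar] at h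
    linarith
  have hfle : ∀ j, |f (y j)| ≤ fM := fun j => by
    rw [hfM]; exact le_ciSup (f := fun i => |f (y i)|) (Set.finite_range _).bddAbove j
  have hfM0 : 0 ≤ fM := (abs_nonneg _).trans (hfle 0)
  have hn1 := norm_centredDiff_le B hB (fun i => f (y i)) hfM0 hfle
  have hn2 := norm_centredDiff_le B hB ((fun i => f (y i)) - fun i => fbar (y i))
    (c := εs * fM) (by positivity) (fun j => by
      have : f (y j) - fbar (y j) = -(ε j * f (y j)) := by rw [hfbar]; ring
      rw [Pi.sub_apply, this, abs_neg, abs_mul]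
      exact mul_le_mul (hε j) (hfle j) (abs_nonneg _) hεs.le)
  set v : Fin (2 * p + 1) → ℝ := fun i => f (y i)
  set w : Fin (2 * p + 1) → ℝ := fun i => fbar (y i)
  set s := √(4 * (p : ℝ) + 2)
  -- splitting into pseudoinverse perturbation, forward error and evaluation error
  have hsplit : toE (Adagᵀ *ᵥ (B *ᵥ v)) - toE (Pbar *ᵥ (B *ᵥ w))
      = toE ((Adagᵀ - Q) *ᵥ (B *ᵥ v)) + toE (Ft *ᵥ (B *ᵥ v)) + toE (Pbar *ᵥ (B *ᵥ (v - w))) := by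
    rw [← toE_sub, ← toE_add, ← toE_add, ← hPbar]
    congr 1
    simp only [Matrix.sub_mulVec, Matrix.add_mulVec, Matrix.mulVec_sub]
    abel
  have hD : spec (Adagᵀ - Q) ≤ √2 * (spec Lpdag / 2 * (C * κ * εs)) / (1 - C * κ * εs) := by
    rw [le_div_iff₀ hCκ, mul_comm, ← hsAd]; exact hQd
  have hP : spec Pbar ≤ spec Lpdag / 2 / ((1 - C * εs) * (1 - C * κ * εs)) := by
    rw [le_div_iff₀ (mul_pos hCε hCκ), ← hsAd]
    calc spec Pbar * ((1 - C * εs) * (1 - C * κ * εs))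
        = (1 - C * κ * εs) * ((1 - C * εs) * spec Pbar) := by ring
      _ ≤ (1 - C * κ * εs) * spec Q := mul_le_mul_of_nonneg_left hPn hCκ.le
      _ ≤ _ := hQn
  have hs0 : 0 ≤ s := Real.sqrt_nonneg _
  have hsf : 0 ≤ s * fM := mul_nonneg hs0 hfM0
  have t1 : ‖toE ((Adagᵀ - Q) *ᵥ (B *ᵥ v))‖ ≤ spec (Adagᵀ - Q) * (s * fM) :=
    (norm_toE_mulVec_le _ _).trans (mul_le_mul_of_nonneg_left hn1 (spec_nonneg _))
  have t2 : ‖toE (Ft *ᵥ (B *ᵥ v))‖ ≤ C * εs * spec Pbar * (s * fM) :=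
    (norm_toE_mulVec_le _ _).trans (mul_le_mul hFt hn1 (norm_nonneg _)
      ((spec_nonneg _).trans hFt))
  have t3 : ‖toE (Pbar *ᵥ (B *ᵥ (v - w)))‖ ≤ spec Pbar * (s * (εs * fM)) :=
    (norm_toE_mulVec_le _ _).trans (mul_le_mul_of_nonneg_left hn2 (spec_nonneg _))
  rw [hsplit, spec_smul hΔpos.le]
  calc _ ≤ spec (Adagᵀ - Q) * (s * fM) + C * εs * spec Pbar * (s * fM)
        + spec Pbar * (s * (εs * fM)) := (norm_add₃_le).trans (by gcongr)
    _ = spec (Adagᵀ - Q) * (s * fM) + spec Pbar * ((C + 1) * εs * (s * fM)) := by ring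
    _ ≤ √2 * (spec Lpdag / 2 * (C * κ * εs)) / (1 - C * κ * εs) * (s * fM)
        + spec Lpdag / 2 / ((1 - C * εs) * (1 - C * κ * εs)) * ((C + 1) * εs * (s * fM)) := by
        gcongr
    _ = _ := by field_simp
end
end
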